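/- arXiv:1912.10323 — 2 statements merged into one kernel-verified Lean document; each statement's English description precedes it below -/
import Mathlib

section
/- Let T' = (t'_k) and T⋆ = (t⋆_k) be admissible event sequences satisfying the asynchrony bounds with parameters τ', τ⋆, τ°, τ♮, let Δ be the associated asynchronous sample-and-hold perturbation operator, and let β = (2(τ' + τ°)/π + √((τ' + τ°)τ♮))². Then the integral quadratic constraint holds: for all real numbers X ≥ 0 and Y ≥ 0 and all v ∈ L²([0,∞)), (βX + τ♮Y)‖v‖² + 2Y⟨Δv, v⟩ − X‖Δv‖² ≥ 0. -/
/-!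
The held sample only changes at the update times `φ_k`: on `[φ_k, φ_{k+1})` one has
`(Δ v)(t) = ∫_{t'_k}^t v`, and if that interval is nonempty then `φ_k < t'_{k+1}`,
`φ_k - t'_k ≤ τ♮` and `φ_{k+1} - t'_k ≤ L := τ' + τ°`
(`Delta_eq`, `phi_lt_of_phi_lt_succ`). In particular the sampling delays `[t'_k, φ_k]` that occur
on nonempty intervals do not overlap, so the energies `∫_{t'_k}^{φ_k} v²` add up to at most `‖v‖²`.

*Cross term.* On one interval `2 ∫ Δv·v` is the increment of `(∫_{t'_k}^t v)²`, hence at least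
`-(∫_{t'_k}^{φ_k} v)² ≥ -τ♮ ∫_{t'_k}^{φ_k} v²` by Cauchy–Schwarz (`cross_bound`).

*Norm term.* On one interval `Δv` is the constant `∫_{t'_k}^{φ_k} v` plus `∫_{φ_k}^t v`. The
second part has gain `2L/π` by a one-sided Wirtinger inequality (`wirtinger`) and the first has
gain `√(L τ♮)` from `[t'_k, φ_k]` by Cauchy–Schwarz. A weighted Young inequality with weights
proportional to the two gains turns this into a bound that can be summed over the intervals
(`norm_bound`).

Summing up to `φ_N` and letting `N → ∞` gives `‖Δv‖² ≤ β ‖v‖²` and `2⟨Δv, v⟩ ≥ -τ♮ ‖v‖²`,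
whose combination with weights `X` and `Y` is the claim.
-/

open MeasureTheory Filter Set

/-- An admissible event sequence: `T 0 = 0`, strictly increasing, tending to `+∞`. -/
def Admissible (T : ℕ → ℝ) : Prop :=
  T 0 = 0 ∧ (∀ k, T k < T (k + 1)) ∧ Tendsto T atTop atTop

/-- `lastIdx T t = max {k | T k ≤ t}`. -/
noncomputable def lastIdx (T : ℕ → ℝ) (t : ℝ) : ℕ := sSup {k | T k ≤ t}

/-- `q(t) = p(t⋆_{n(t)})`: index of the sample held at the most recent hold update. -/
noncomputable def qIdx (Tp Ts : ℕ → ℝ) (t : ℝ) : ℕ := lastIdx Tp (Ts (lastIdx Ts t))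

/-- `φ_k = min {t⋆_j | t⋆_j ≥ t'_k}`, the first hold update at or after sample `k`. -/
noncomputable def phi (Tp Ts : ℕ → ℝ) (k : ℕ) : ℝ := Ts (sInf {j | Tp k ≤ Ts j})

/-- The asynchrony bounds (3) on the sample sequence `Tp = T'` and update sequence
`Ts = T⋆`, with parameters `τ' > 0`, `τ⋆ > 0`, `τ° ∈ [0,τ⋆]`, `τ♮ ∈ [0, min τ° τ']`. -/
def AsyncBounds (Tp Ts : ℕ → ℝ) (τp τs τc τn : ℝ) : Prop :=
  0 < τp ∧ 0 < τs ∧ 0 ≤ τc ∧ τc ≤ τs ∧ 0 ≤ τn ∧ τn ≤ min τc τp ∧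
  (∀ k, Tp (k + 1) - Tp k ≤ τp) ∧
  (∀ k, Ts (k + 1) - Ts k ≤ τs) ∧
  (∀ k, phi Tp Ts k - Tp k ≤ τc) ∧
  (∀ k, phi Tp Ts k - Tp (lastIdx Tp (phi Tp Ts k)) ≤ τn)

/-- The asynchronous sample-and-hold perturbation `(Δ v)(t) = ∫_{t'_{q(t)}}^{t} v(x) dx`. -/
noncomputable def Delta (Tp Ts : ℕ → ℝ) (v : ℝ → ℝ) (t : ℝ) : ℝ :=
  ∫ x in (Tp (qIdx Tp Ts t))..t, v x

/-! ### One-dimensional integral inequalities -/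

lemma integral_deriv_mul_eq {F G f g : ℝ → ℝ} {a b : ℝ}
    (hF : AbsolutelyContinuousOnInterval F a b) (hG : AbsolutelyContinuousOnInterval G a b)
    (hf : ∀ᵐ x, x ∈ uIcc a b → HasDerivAt F (f x) x)
    (hg : ∀ᵐ x, x ∈ uIcc a b → HasDerivAt G (g x) x) :
    ∫ x in a..b, (f x * G x + F x * g x) = F b * G b - F a * G a := by
  rw [← hF.integral_deriv_mul_eq_sub hG]
  apply intervalIntegral.integral_congr_ae
  filter_upwards [hf, hg] with x h1 h2 hx
  have hx' := uIoc_subset_uIcc hx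
  rw [(h1 hx').deriv, (h2 hx').deriv]

/-- Cauchy–Schwarz with a positive weight `w`. -/
lemma sq_integral_le {v w : ℝ → ℝ} {a b : ℝ} (hab : a ≤ b)
    (hv : IntervalIntegrable v volume a b)
    (hvw : IntervalIntegrable (fun x => v x ^ 2 / w x) volume a b)
    (hw : IntervalIntegrable w volume a b) (hpos : ∀ x ∈ Icc a b, 0 < w x) :
    (∫ x in a..b, v x) ^ 2 ≤ (∫ x in a..b, v x ^ 2 / w x) * ∫ x in a..b, w x := by
  rcases hab.eq_or_lt with rfl | hlt
  · simp
  have hS : 0 < ∫ x in a..b, w x :=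
    intervalIntegral.intervalIntegral_pos_of_pos_on hw
      (fun x hx => hpos x (Ioo_subset_Icc_self hx)) hlt
  set S := ∫ x in a..b, w x with hSdef
  set I := ∫ x in a..b, v x with hIdef
  -- expand `∫ (v - c w)² / w ≥ 0` at its minimiser `c = I / S`
  have h0 : 0 ≤ ∫ x in a..b, (v x ^ 2 / w x - 2 * (I / S) * v x + (I / S) ^ 2 * w x) := by
    apply intervalIntegral.integral_nonneg hab
    intro x hx
    have hw0 := hpos x hx
    have : v x ^ 2 / w x - 2 * (I / S) * v x + (I / S) ^ 2 * w x
        = (v x - I / S * w x) ^ 2 / w x := by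
      field_simp
      ring
    rw [this]
    positivity
  rw [intervalIntegral.integral_add (hvw.sub (hv.const_mul _)) (hw.const_mul _),
    intervalIntegral.integral_sub hvw (hv.const_mul _), intervalIntegral.integral_const_mul,
    intervalIntegral.integral_const_mul, ← hSdef, ← hIdef] at h0
  have h1 : (∫ x in a..b, v x ^ 2 / w x) - 2 * (I / S) * I + (I / S) ^ 2 * S
      = (∫ x in a..b, v x ^ 2 / w x) - I ^ 2 / S := by
    field_simp
    ring
  rw [h1, sub_nonneg, div_le_iff₀ hS] at h0
  exact h0

lemma sq_integral_le_length {v : ℝ → ℝ} {a b : ℝ} (hab : a ≤ b)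
    (hv : IntervalIntegrable v volume a b)
    (hv2 : IntervalIntegrable (fun x => v x ^ 2) volume a b) :
    (∫ x in a..b, v x) ^ 2 ≤ (b - a) * ∫ x in a..b, v x ^ 2 := by
  have := sq_integral_le (w := fun _ => 1) hab hv (by simpa using hv2) (by simp) (by simp)
  simpa [mul_comm] using this

/-- The Wirtinger inequality with slack in the length, obtained by Cauchy–Schwarz with weight
`cos (k (x - b))`, where `k = π / (2 M)`. Because `c - b < M`, this weight is bounded away from
zero on `[b, c]`. -/
lemma wirtinger_aux {v : ℝ → ℝ} {b c M : ℝ} (hbc : b ≤ c) (hM : c - b < M)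
    (hv : IntervalIntegrable v volume b c)
    (hv2 : IntervalIntegrable (fun x => v x ^ 2) volume b c) :
    ∫ t in b..c, (∫ x in b..t, v x) ^ 2 ≤ (2 * M / Real.pi) ^ 2 * ∫ x in b..c, v x ^ 2 := by
  have hM0 : 0 < M := by linarith
  have hpi := Real.pi_pos
  obtain ⟨k, hk⟩ : ∃ k, k = Real.pi / (2 * M) := ⟨_, rfl⟩
  have hk0 : 0 < k := by rw [hk]; positivity
  have hkM : k * M = Real.pi / 2 := by rw [hk]; field_simp
  have hkinv : (2 * M / Real.pi) ^ 2 = 1 / k ^ 2 := by rw [hk]; field_simp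
  have hcos : ∀ x ∈ Icc b c, 0 < Real.cos (k * (x - b)) := by
    intro x hx
    apply Real.cos_pos_of_mem_Ioo
    constructor
    · have : 0 ≤ k * (x - b) := mul_nonneg hk0.le (by linarith [hx.1])
      linarith
    · rw [← hkM]
      exact mul_lt_mul_of_pos_left (by linarith [hx.2]) hk0
  set h : ℝ → ℝ := fun x => v x ^ 2 / Real.cos (k * (x - b)) with hh
  have hhi : IntervalIntegrable h volume b c := by
    have : h = fun x => v x ^ 2 * (Real.cos (k * (x - b)))⁻¹ := by
      funext x
      rw [hh]
      exact div_eq_mul_inv _ _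
    rw [this]
    apply hv2.mul_continuousOn
    apply ContinuousOn.inv₀ (by fun_prop)
    intro x hx
    rw [uIcc_of_le hbc] at hx
    exact (hcos x hx).ne'
  set H : ℝ → ℝ := fun t => ∫ x in b..t, h x with hH
  have hHac : AbsolutelyContinuousOnInterval H b c :=
    hhi.absolutelyContinuousOnInterval_intervalIntegral left_mem_uIcc
  have hsinint : ∀ t, ∫ x in b..t, Real.cos (k * (x - b)) = Real.sin (k * (t - b)) / k := by
    intro t
    rw [intervalIntegral.integral_eq_sub_of_hasDerivAt
      (f := fun x => Real.sin (k * (x - b)) / k)]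
    · simp
    · intro x _
      have h1 : HasDerivAt (fun x => k * (x - b)) k x := by
        simpa using ((hasDerivAt_id x).sub_const b).const_mul k
      exact (h1.sin.div_const k).congr_deriv (mul_div_cancel_right₀ _ hk0.ne')
    · exact Continuous.intervalIntegrable (by fun_prop) _ _
  have hpt : ∀ t ∈ Icc b c,
      (∫ x in b..t, v x) ^ 2 ≤ H t * (Real.sin (k * (t - b)) / k) := by
    intro t ht
    have hsub : uIcc b t ⊆ uIcc b c := by
      rw [uIcc_of_le ht.1, uIcc_of_le hbc]
      exact Icc_subset_Icc_right ht.2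
    rw [← hsinint t]
    exact sq_integral_le (w := fun x => Real.cos (k * (x - b))) ht.1 (hv.mono_set hsub)
      (hhi.mono_set hsub) (Continuous.intervalIntegrable (by fun_prop) _ _)
      (fun x hx => hcos x ⟨hx.1, hx.2.trans ht.2⟩)
  have hvc : ContinuousOn (fun t => ∫ x in b..t, v x) (uIcc b c) :=
    (hv.absolutelyContinuousOnInterval_intervalIntegral left_mem_uIcc).continuousOn
  have hint : IntervalIntegrable (fun t => H t * (Real.sin (k * (t - b)) / k)) volume b c :=
    ContinuousOn.intervalIntegrable (hHac.continuousOn.mul (by fun_prop))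
  refine (intervalIntegral.integral_mono_on hbc ((hvc.pow 2).intervalIntegrable) hint hpt).trans ?_
  -- integrate by parts against the antiderivative `-cos (k (t - b)) / k²` of `sin (k (t - b)) / k`
  have hG : AbsolutelyContinuousOnInterval (fun t => -Real.cos (k * (t - b)) / k ^ 2) b c := by
    apply ContDiffOn.absolutelyContinuousOnInterval
    fun_prop
  have hder : ∀ x, HasDerivAt (fun t => -Real.cos (k * (t - b)) / k ^ 2)
      (Real.sin (k * (x - b)) / k) x := by
    intro x
    have h1 : HasDerivAt (fun x => k * (x - b)) k x := by
      simpa using ((hasDerivAt_id x).sub_const b).const_mul k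
    have h2 : HasDerivAt (fun t => -Real.cos (k * (t - b)) / k ^ 2)
        (-(-Real.sin (k * (x - b)) * k) / k ^ 2) x := h1.cos.neg.div_const (k ^ 2)
    exact h2.congr_deriv (by field_simp)
  have hparts := integral_deriv_mul_eq hHac hG (f := h)
    (by filter_upwards [hhi.ae_hasDerivAt_integral] with x hx hxm
        exact hx hxm b left_mem_uIcc)
    (Eventually.of_forall fun x _ => hder x)
  have hint1 : IntervalIntegrable (fun x => h x * (-Real.cos (k * (x - b)) / k ^ 2)) volume b c :=
    hhi.mul_continuousOn hG.continuousOn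
  rw [intervalIntegral.integral_add hint1 hint] at hparts
  have heq : ∫ x in b..c, h x * (-Real.cos (k * (x - b)) / k ^ 2)
      = -(1 / k ^ 2) * ∫ x in b..c, v x ^ 2 := by
    rw [← intervalIntegral.integral_const_mul]
    apply intervalIntegral.integral_congr
    intro x hx
    rw [uIcc_of_le hbc] at hx
    have := (hcos x hx).ne'
    simp only [hh]
    field_simp
  have hHb : H b = 0 := by simp [hH]
  have hHc : 0 ≤ H c := intervalIntegral.integral_nonneg hbc
    (fun x hx => div_nonneg (sq_nonneg _) (hcos x hx).le)
  have hcc := hcos c (right_mem_Icc.2 hbc)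
  have hlast : 0 ≤ H c * (Real.cos (k * (c - b)) / k ^ 2) := by positivity
  rw [heq, hHb] at hparts
  rw [hkinv]
  have : H c * (-Real.cos (k * (c - b)) / k ^ 2) = -(H c * (Real.cos (k * (c - b)) / k ^ 2)) := by
    ring
  linarith

/-- One-sided Wirtinger inequality: the Volterra operator on an interval of length at most `L`
has norm at most `2 L / π`. -/
lemma wirtinger {v : ℝ → ℝ} {b c L : ℝ} (hbc : b ≤ c) (hL : c - b ≤ L)
    (hv : IntervalIntegrable v volume b c)
    (hv2 : IntervalIntegrable (fun x => v x ^ 2) volume b c) :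
    ∫ t in b..c, (∫ x in b..t, v x) ^ 2 ≤ (2 * L / Real.pi) ^ 2 * ∫ x in b..c, v x ^ 2 := by
  have hlim : Tendsto (fun M : ℝ => (2 * M / Real.pi) ^ 2 * ∫ x in b..c, v x ^ 2)
      (nhdsWithin L (Ioi L)) (nhds ((2 * L / Real.pi) ^ 2 * ∫ x in b..c, v x ^ 2)) := by
    apply Tendsto.mono_left _ nhdsWithin_le_nhds
    apply Continuous.tendsto
    fun_prop
  refine ge_of_tendsto hlim ?_
  filter_upwards [self_mem_nhdsWithin] with M hM
  exact wirtinger_aux hbc (lt_of_le_of_lt hL hM) hv hv2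

/-! ### Bounds on a single hold interval -/

/-- On a hold interval `[b, c]` with held sample time `a`, the cross term loses at most the energy
of `v` on the sampling delay `[a, b]`. -/
lemma cross_bound {v : ℝ → ℝ} {a b c n : ℝ} (hab : a ≤ b) (hbc : b ≤ c) (hn : b - a ≤ n)
    (hv : IntervalIntegrable v volume a c)
    (hv2 : IntervalIntegrable (fun x => v x ^ 2) volume a c) :
    -(n * ∫ x in a..b, v x ^ 2) ≤ 2 * ∫ t in b..c, (∫ x in a..t, v x) * v t := by
  have hac := hab.trans hbc
  have hs1 : uIcc b c ⊆ uIcc a c := by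
    rw [uIcc_of_le hbc, uIcc_of_le hac]; exact Icc_subset_Icc_left hab
  have hs2 : uIcc a b ⊆ uIcc a c := by
    rw [uIcc_of_le hab, uIcc_of_le hac]; exact Icc_subset_Icc_right hbc
  have hac' : AbsolutelyContinuousOnInterval (fun t => ∫ x in a..t, v x) b c :=
    (hv.absolutelyContinuousOnInterval_intervalIntegral left_mem_uIcc).mono hs1
  have hd : ∀ᵐ x, x ∈ uIcc b c → HasDerivAt (fun t => ∫ x in a..t, v x) (v x) x := by
    filter_upwards [hv.ae_hasDerivAt_integral] with x hx hxm
    exact hx (hs1 hxm) a left_mem_uIcc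
  have hp := integral_deriv_mul_eq hac' hac' hd hd
  have he : ∫ x in b..c, (v x * (∫ y in a..x, v y) + (∫ y in a..x, v y) * v x)
      = 2 * ∫ t in b..c, (∫ x in a..t, v x) * v t := by
    rw [← intervalIntegral.integral_const_mul]
    congr 1
    funext x
    ring
  rw [← he, hp]
  have h1 := sq_integral_le_length hab (hv.mono_set hs2) (hv2.mono_set hs2)
  have h2 : 0 ≤ ∫ x in a..b, v x ^ 2 :=
    intervalIntegral.integral_nonneg hab (fun x _ => sq_nonneg _)
  nlinarith [mul_le_mul_of_nonneg_right hn h2, sq_nonneg (∫ x in a..c, v x)]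

/-- On a hold interval `[b, c]` with held sample time `a`, the energy of `Δ v` is bounded by the
energies of `v` on `[b, c]` and on the sampling delay `[a, b]`. With `A` and `B` the gains of the
two contributions, the coefficients are chosen so that they add up to `(A + B)²`. -/
lemma norm_bound {v : ℝ → ℝ} {a b c n L : ℝ} (hL0 : 0 < L) (hab : a ≤ b) (hbc : b ≤ c)
    (hn : b - a ≤ n) (hL : c - a ≤ L)
    (hv : IntervalIntegrable v volume a c)
    (hv2 : IntervalIntegrable (fun x => v x ^ 2) volume a c) :
    ∫ t in b..c, (∫ x in a..t, v x) ^ 2 ≤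
      (2 * L / Real.pi + Real.sqrt (L * n)) *
        (2 * L / Real.pi * (∫ x in b..c, v x ^ 2) + Real.sqrt (L * n) * ∫ x in a..b, v x ^ 2) := by
  have hac := hab.trans hbc
  have hs1 : uIcc b c ⊆ uIcc a c := by
    rw [uIcc_of_le hbc, uIcc_of_le hac]; exact Icc_subset_Icc_left hab
  have hs2 : uIcc a b ⊆ uIcc a c := by
    rw [uIcc_of_le hab, uIcc_of_le hac]; exact Icc_subset_Icc_right hbc
  have hn0 : 0 ≤ n := by linarith
  have hA : 0 < 2 * L / Real.pi := by have := Real.pi_pos; positivity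
  have hB : 0 ≤ Real.sqrt (L * n) := Real.sqrt_nonneg _
  have hB2 : Real.sqrt (L * n) ^ 2 = L * n := Real.sq_sqrt (by positivity)
  have hW := wirtinger (L := L) hbc (by linarith) (hv.mono_set hs1) (hv2.mono_set hs1)
  have hZ := sq_integral_le_length hab (hv.mono_set hs2) (hv2.mono_set hs2)
  have hE : 0 ≤ ∫ x in a..b, v x ^ 2 :=
    intervalIntegral.integral_nonneg hab (fun x _ => sq_nonneg _)
  set A := 2 * L / Real.pi
  set B := Real.sqrt (L * n)
  set E := ∫ x in a..b, v x ^ 2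
  set V := ∫ x in b..c, v x ^ 2
  set z := ∫ x in a..b, v x with hz
  have hZ' : z ^ 2 ≤ n * E := hZ.trans (mul_le_mul_of_nonneg_right hn hE)
  have hsplit : ∀ t ∈ Icc b c, ∫ x in a..t, v x = (∫ x in b..t, v x) + z := by
    intro t ht
    rw [hz, add_comm, intervalIntegral.integral_add_adjacent_intervals (hv.mono_set hs2)]
    apply hv.mono_set
    rw [uIcc_of_le ht.1, uIcc_of_le hac]
    exact Icc_subset_Icc hab ht.2
  have hwc : ContinuousOn (fun t => ∫ x in b..t, v x) (uIcc b c) :=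
    ((hv.mono_set hs1).absolutelyContinuousOnInterval_intervalIntegral left_mem_uIcc).continuousOn
  have hDc : ContinuousOn (fun t => ∫ x in a..t, v x) (uIcc b c) :=
    (hv.absolutelyContinuousOnInterval_intervalIntegral left_mem_uIcc).continuousOn.mono hs1
  have hwi : IntervalIntegrable (fun t => (A + B) / A * (∫ x in b..t, v x) ^ 2) volume b c :=
    ((hwc.pow 2).const_smul ((A + B) / A)).intervalIntegrable
  have hDi : IntervalIntegrable (fun t => (∫ x in a..t, v x) ^ 2) volume b c :=
    (hDc.pow 2).intervalIntegrable
  -- in the case `B = 0` the constant part `z` vanishes, and any value of `r` will do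
  obtain ⟨r, hr0, hr1, hr2⟩ : ∃ r : ℝ, 0 ≤ r ∧
      (∀ w : ℝ, (w + z) ^ 2 ≤ (A + B) / A * w ^ 2 + r * z ^ 2) ∧
      r * (L * (n * E)) ≤ (A + B) * B * E := by
    rcases hB.eq_or_lt with hB0 | hBpos
    · have hn' : n = 0 := by
        have : L * n = 0 := by rw [← hB2, ← hB0]; ring
        rcases mul_eq_zero.1 this with h | h
        · exact absurd h hL0.ne'
        · exact h
      have hz0 : z = 0 := by
        have : z ^ 2 ≤ 0 := by rw [hn', zero_mul] at hZ'; exact hZ'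
        exact pow_eq_zero_iff (two_ne_zero) |>.1 (le_antisymm this (sq_nonneg z))
      refine ⟨0, le_rfl, fun w => ?_, ?_⟩
      · rw [hz0, ← hB0, add_zero A, div_self hA.ne']
        simp
      · rw [← hB0]; simp
    · refine ⟨(A + B) / B, by positivity, fun w => ?_, ?_⟩
      · have : (A + B) / A * w ^ 2 + (A + B) / B * z ^ 2 - (w + z) ^ 2
            = (B * w - A * z) ^ 2 / (A * B) := by
          field_simp
          ring
        have h2 : 0 ≤ (B * w - A * z) ^ 2 / (A * B) := by positivity
        linarith
      · have : (A + B) / B * (L * (n * E)) = (A + B) / B * (B ^ 2 * E) := by rw [hB2]; ring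
        rw [this]
        apply le_of_eq
        field_simp
  calc ∫ t in b..c, (∫ x in a..t, v x) ^ 2
      ≤ ∫ t in b..c, ((A + B) / A * (∫ x in b..t, v x) ^ 2 + r * z ^ 2) := by
        apply intervalIntegral.integral_mono_on hbc hDi (hwi.add (by simp))
        intro t ht
        rw [hsplit t ht]
        exact hr1 _
    _ = (A + B) / A * (∫ t in b..c, (∫ x in b..t, v x) ^ 2) + (c - b) * (r * z ^ 2) := by
        rw [intervalIntegral.integral_add hwi (by simp),
          intervalIntegral.integral_const_mul, intervalIntegral.integral_const, smul_eq_mul]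
    _ ≤ (A + B) / A * (A ^ 2 * V) + L * (r * (n * E)) := by
        gcongr
        linarith
    _ ≤ (A + B) * (A * V) + (A + B) * B * E := by
        have : (A + B) / A * (A ^ 2 * V) = (A + B) * (A * V) := by field_simp
        rw [this]
        linarith
    _ = (A + B) * (A * V + B * E) := by ring

/-! ### Combinatorics of the event sequences -/

lemma Admissible.strictMono {T : ℕ → ℝ} (h : Admissible T) : StrictMono T :=
  strictMono_nat_of_lt_succ h.2.1

lemma Admissible.lastIdx_eq {T : ℕ → ℝ} (h : Admissible T) {t : ℝ} {k : ℕ} (h1 : T k ≤ t)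
    (h2 : t < T (k + 1)) : lastIdx T t = k := by
  have : {j | T j ≤ t} = Iic k := by
    ext j
    simp only [mem_ofPred_eq, mem_Iic]
    refine ⟨fun hj => ?_, fun hj => (h.strictMono.monotone hj).trans h1⟩
    exact Nat.lt_succ_iff.1 (h.strictMono.lt_iff_lt.1 (hj.trans_lt h2))
  rw [lastIdx, this, csSup_Iic]

lemma Admissible.exists_between {T : ℕ → ℝ} (h : Admissible T) {t : ℝ} (ht : 0 ≤ t) :
    ∃ k, T k ≤ t ∧ t < T (k + 1) := by
  classical
  have hex : ∃ n, t < T n := (h.2.2.eventually_gt_atTop t).exists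
  have h0 : Nat.find hex ≠ 0 := by
    intro h0
    have := Nat.find_spec hex
    rw [h0, h.1] at this
    linarith
  obtain ⟨k, hk⟩ := Nat.exists_eq_succ_of_ne_zero h0
  refine ⟨k, not_lt.1 (Nat.find_min hex (by omega)), ?_⟩
  have := Nat.find_spec hex
  rwa [hk] at this

lemma phi_spec {Tp Ts : ℕ → ℝ} (hTs : Admissible Ts) (k : ℕ) :
    ∃ j, phi Tp Ts k = Ts j ∧ Tp k ≤ Ts j ∧ ∀ i, Tp k ≤ Ts i → j ≤ i := by
  have hne : {j | Tp k ≤ Ts j}.Nonempty := (hTs.2.2.eventually_ge_atTop (Tp k)).exists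
  exact ⟨_, rfl, Nat.sInf_mem hne, fun i hi => Nat.sInf_le hi⟩

lemma phi_zero {Tp Ts : ℕ → ℝ} (hTp : Admissible Tp) (hTs : Admissible Ts) :
    phi Tp Ts 0 = 0 := by
  obtain ⟨j, h1, -, h3⟩ := phi_spec (Tp := Tp) hTs 0
  have := h3 0 (by rw [hTp.1, hTs.1])
  rw [h1, Nat.le_zero.1 this, hTs.1]

lemma le_phi {Tp Ts : ℕ → ℝ} (hTs : Admissible Ts) (k : ℕ) : Tp k ≤ phi Tp Ts k := by
  obtain ⟨j, h1, h2, -⟩ := phi_spec (Tp := Tp) hTs k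
  rwa [h1]

lemma phi_le_succ {Tp Ts : ℕ → ℝ} (hTp : Admissible Tp) (hTs : Admissible Ts) (k : ℕ) :
    phi Tp Ts k ≤ phi Tp Ts (k + 1) := by
  obtain ⟨j, h1, -, h3⟩ := phi_spec (Tp := Tp) hTs k
  obtain ⟨i, h4, h5, -⟩ := phi_spec (Tp := Tp) hTs (k + 1)
  rw [h1, h4]
  exact hTs.strictMono.monotone (h3 i ((hTp.2.1 k).le.trans h5))

/-- If sample `k` is held on a nonempty interval, then it is picked up before sample `k + 1` is
taken. -/
lemma phi_lt_of_phi_lt_succ {Tp Ts : ℕ → ℝ} (hTs : Admissible Ts) {k : ℕ}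
    (h : phi Tp Ts k < phi Tp Ts (k + 1)) : phi Tp Ts k < Tp (k + 1) := by
  obtain ⟨j, h1, -, -⟩ := phi_spec (Tp := Tp) hTs k
  obtain ⟨i, h4, -, h6⟩ := phi_spec (Tp := Tp) hTs (k + 1)
  by_contra! hc
  rw [h1] at hc h
  rw [h4] at h
  exact absurd (hTs.strictMono.monotone (h6 j hc)) (not_le.2 h)

/-- Sample `k` is the one held throughout `[φ_k, φ_{k+1})`. -/
lemma Delta_eq {Tp Ts : ℕ → ℝ} (hTp : Admissible Tp) (hTs : Admissible Ts) (v : ℝ → ℝ)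
    {k : ℕ} {t : ℝ} (h1 : phi Tp Ts k ≤ t) (h2 : t < phi Tp Ts (k + 1)) :
    Delta Tp Ts v t = ∫ x in (Tp k)..t, v x := by
  obtain ⟨j, hj1, hj2, -⟩ := phi_spec (Tp := Tp) hTs k
  obtain ⟨i, hi1, -, hi3⟩ := phi_spec (Tp := Tp) hTs (k + 1)
  have h0 : 0 ≤ t := by
    have := hTs.strictMono.monotone (Nat.zero_le j)
    rw [hTs.1, ← hj1] at this
    linarith
  obtain ⟨n, hn1, hn2⟩ := hTs.exists_between h0
  have hjn : j ≤ n := by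
    rw [hj1] at h1
    exact Nat.lt_succ_iff.1 (hTs.strictMono.lt_iff_lt.1 (h1.trans_lt hn2))
  have hq : qIdx Tp Ts t = k := by
    rw [qIdx, hTs.lastIdx_eq hn1 hn2]
    apply hTp.lastIdx_eq (hj2.trans (hTs.strictMono.monotone hjn))
    by_contra! hc
    have := hTs.strictMono.monotone (hi3 n hc)
    rw [hi1] at h2
    linarith
  rw [Delta, hq]

/-! ### Summation over the hold intervals -/

/-- The data of the two event sequences that the summation uses: `a k` is the time of sample `k`,
and `[b k, b (k + 1))` is the possibly empty interval on which it is held. -/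
structure HoldData (a b : ℕ → ℝ) (n L : ℝ) : Prop where
  a_zero : a 0 = 0
  b_zero : b 0 = 0
  a_mono : Monotone a
  b_mono : Monotone b
  a_le_b : ∀ k, a k ≤ b k
  nonempty_hold : ∀ k, b k < b (k + 1) →
    b k < a (k + 1) ∧ b k - a k ≤ n ∧ b (k + 1) - a k ≤ L

lemma holdData {Tp Ts : ℕ → ℝ} (hTp : Admissible Tp) (hTs : Admissible Ts)
    {τp τs τc τn : ℝ} (hb : AsyncBounds Tp Ts τp τs τc τn) :
    HoldData Tp (phi Tp Ts) τn (τp + τc) := by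
  obtain ⟨-, -, -, -, -, -, h7, -, h9, h10⟩ := hb
  refine ⟨hTp.1, phi_zero hTp hTs, hTp.strictMono.monotone,
    monotone_nat_of_le_succ (phi_le_succ hTp hTs), le_phi hTs, fun k hk => ?_⟩
  have h1 := phi_lt_of_phi_lt_succ hTs hk
  have h2 := h10 k
  rw [hTp.lastIdx_eq (le_phi hTs k) h1] at h2
  exact ⟨h1, h2, by linarith [h7 k, h9 (k + 1)]⟩

section Summation

variable {a b : ℕ → ℝ} {n L : ℝ} {v : ℝ → ℝ}

lemma HoldData.a_nonneg (h : HoldData a b n L) (k : ℕ) : 0 ≤ a k :=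
  h.a_zero ▸ h.a_mono (Nat.zero_le k)

lemma HoldData.b_nonneg (h : HoldData a b n L) (k : ℕ) : 0 ≤ b k :=
  (h.a_nonneg k).trans (h.a_le_b k)

lemma intervalIntegrable_of_Ioi {f : ℝ → ℝ} (hf : IntegrableOn f (Ioi 0)) {x y : ℝ} (hx : 0 ≤ x)
    (hy : 0 ≤ y) : IntervalIntegrable f volume x y := by
  rw [intervalIntegrable_iff]
  exact hf.mono_set fun z hz => (le_min hx hy).trans_lt hz.1

lemma intervalIntegrable_of_sq (hv : Measurable v)
    (hv2 : IntegrableOn (fun x => v x ^ 2) (Ioi 0)) {x y : ℝ} (hx : 0 ≤ x) (hy : 0 ≤ y) :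
    IntervalIntegrable v volume x y := by
  have h1 : IntervalIntegrable (fun x => 1 + v x ^ 2) volume x y :=
    (by simp : IntervalIntegrable (fun _ => (1 : ℝ)) volume x y).add
      (intervalIntegrable_of_Ioi hv2 hx hy)
  apply h1.mono_fun hv.aestronglyMeasurable
  apply Eventually.of_forall
  intro z
  simp only [Real.norm_eq_abs]
  rw [abs_of_nonneg (by positivity : 0 ≤ 1 + v z ^ 2)]
  nlinarith [sq_abs (v z), sq_nonneg (|v z| - 1), abs_nonneg (v z)]

lemma integral_sq_le_norm (hv2 : IntegrableOn (fun x => v x ^ 2) (Ioi 0)) {y : ℝ} (hy : 0 ≤ y) :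
    ∫ x in (0 : ℝ)..y, v x ^ 2 ≤ ∫ x in Ioi (0 : ℝ), v x ^ 2 := by
  rw [intervalIntegral.integral_of_le hy]
  exact setIntegral_mono_set hv2 (Eventually.of_forall fun x => sq_nonneg _)
    (Eventually.of_forall fun x hx => hx.1)

/-- If on every nonempty hold interval the integral of `g` is bounded by the energy of `v` there
and on the preceding sampling delay, with coefficients `p` and `q`, then `∫ g ≤ (p + q) ‖v‖²`.
When `g` is not integrable, its integral is zero by convention and the bound is trivial. -/
lemma HoldData.integral_le (h : HoldData a b n L) (hlim : Tendsto b atTop atTop)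
    (hv2 : IntegrableOn (fun x => v x ^ 2) (Ioi 0)) {g : ℝ → ℝ} {p q : ℝ} (hp : 0 ≤ p)
    (hq : 0 ≤ q)
    (hg : ∀ k, b k < b (k + 1) → ∫ t in (b k)..(b (k + 1)), g t ≤
      p * (∫ x in (b k)..(b (k + 1)), v x ^ 2) + q * ∫ x in (a k)..(b k), v x ^ 2) :
    ∫ t in Ioi (0 : ℝ), g t ≤ (p + q) * ∫ x in Ioi (0 : ℝ), v x ^ 2 := by
  have hV : 0 ≤ ∫ x in Ioi (0 : ℝ), v x ^ 2 := integral_nonneg fun x => sq_nonneg _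
  by_cases hgi : IntegrableOn g (Ioi 0)
  swap
  · rw [integral_undef hgi]
    positivity
  have hVi : ∀ {x y : ℝ}, 0 ≤ x → 0 ≤ y → IntervalIntegrable (fun x => v x ^ 2) volume x y :=
    fun hx hy => intervalIntegrable_of_Ioi hv2 hx hy
  -- the delay `[a k, b k]` of a nonempty hold interval lies inside `[a k, a (k + 1)]`
  have hstep : ∀ k, ∫ t in (b k)..(b (k + 1)), g t ≤
      p * (∫ x in (b k)..(b (k + 1)), v x ^ 2) +
        q * ∫ x in (a k)..(a (k + 1)), v x ^ 2 := by
    intro k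
    have hbk := h.b_mono (Nat.le_succ k)
    rcases hbk.eq_or_lt with heq | hlt
    · have : 0 ≤ ∫ x in (a k)..(a (k + 1)), v x ^ 2 :=
        intervalIntegral.integral_nonneg (h.a_mono (Nat.le_succ k)) fun x _ => sq_nonneg _
      simp only [Nat.succ_eq_add_one] at heq
      rw [← heq, intervalIntegral.integral_same, intervalIntegral.integral_same]
      simpa using mul_nonneg hq this
    · refine (hg k hlt).trans ?_
      have h1 := (h.nonempty_hold k hlt).1
      refine add_le_add le_rfl (mul_le_mul_of_nonneg_left ?_ hq)
      exact intervalIntegral.integral_mono_interval le_rfl (h.a_le_b k) h1.le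
        (Eventually.of_forall fun x => sq_nonneg _) (hVi (h.a_nonneg _) (h.a_nonneg _))
  refine le_of_tendsto (intervalIntegral_tendsto_integral_Ioi 0 hgi hlim)
    (Eventually.of_forall fun N => ?_)
  have e1 := intervalIntegral.sum_integral_adjacent_intervals (a := b) (n := N) (f := g)
    (μ := volume) fun k _ => intervalIntegrable_of_Ioi hgi (h.b_nonneg _) (h.b_nonneg _)
  have e2 := intervalIntegral.sum_integral_adjacent_intervals (a := b) (n := N)
    (f := fun x => v x ^ 2) (μ := volume) fun k _ => hVi (h.b_nonneg _) (h.b_nonneg _)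
  have e3 := intervalIntegral.sum_integral_adjacent_intervals (a := a) (n := N)
    (f := fun x => v x ^ 2) (μ := volume) fun k _ => hVi (h.a_nonneg _) (h.a_nonneg _)
  rw [h.b_zero] at e1 e2
  rw [h.a_zero] at e3
  rw [← e1]
  refine (Finset.sum_le_sum fun k _ => hstep k).trans ?_
  rw [Finset.sum_add_distrib, ← Finset.mul_sum, ← Finset.mul_sum, e2, e3, add_mul]
  gcongr
  · exact integral_sq_le_norm hv2 (h.b_nonneg N)
  · exact integral_sq_le_norm hv2 (h.a_nonneg N)

end Summation

/-- IQC family: with `β = (2(τ'+τ°)/π + √((τ'+τ°)τ♮))²`, for all `X, Y ≥ 0` and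
`v ∈ L²([0,∞))`, `(βX + τ♮Y)‖v‖² + 2Y⟨Δv,v⟩ − X‖Δv‖² ≥ 0`. -/
theorem stmt10 (Tp Ts : ℕ → ℝ) (hTp : Admissible Tp) (hTs : Admissible Ts)
    (τp τs τc τn : ℝ) (hb : AsyncBounds Tp Ts τp τs τc τn)
    (β : ℝ)
    (hβ : β = (2 * (τp + τc) / Real.pi + Real.sqrt ((τp + τc) * τn)) ^ 2)
    (X Y : ℝ) (hX : 0 ≤ X) (hY : 0 ≤ Y)
    (v : ℝ → ℝ) (hv : Measurable v)
    (hv2 : IntegrableOn (fun x => v x ^ 2) (Set.Ioi 0)) :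
    0 ≤ (β * X + τn * Y) * (∫ t in Set.Ioi (0 : ℝ), v t ^ 2) +
        2 * Y * (∫ t in Set.Ioi (0 : ℝ), Delta Tp Ts v t * v t) -
        X * ∫ t in Set.Ioi (0 : ℝ), Delta Tp Ts v t ^ 2 := by
  have H := holdData hTp hTs hb
  obtain ⟨hτp, -, hτc, -, hτn, -⟩ := hb
  have hL0 : 0 < τp + τc := by linarith
  have hlim : Tendsto (phi Tp Ts) atTop atTop := tendsto_atTop_mono (le_phi hTs) hTp.2.2
  have hcongr : ∀ k (F : ℝ → ℝ → ℝ),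
      ∫ t in (phi Tp Ts k)..(phi Tp Ts (k + 1)), F t (Delta Tp Ts v t) =
        ∫ t in (phi Tp Ts k)..(phi Tp Ts (k + 1)), F t (∫ x in (Tp k)..t, v x) := by
    intro k F
    apply intervalIntegral.integral_congr_ae
    -- the right endpoint, where the held sample has already changed, is a null set
    filter_upwards [Measure.ae_ne volume (phi Tp Ts (k + 1))] with t hne ht
    rw [uIoc_of_le (phi_le_succ hTp hTs k)] at ht
    rw [Delta_eq hTp hTs v ht.1.le (lt_of_le_of_ne ht.2 hne)]
  have hvi : ∀ k, IntervalIntegrable v volume (Tp k) (phi Tp Ts (k + 1)) := fun k =>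
    intervalIntegrable_of_sq hv hv2 (H.a_nonneg k) (H.b_nonneg _)
  have hvi2 : ∀ k, IntervalIntegrable (fun x => v x ^ 2) volume (Tp k) (phi Tp Ts (k + 1)) :=
    fun k => intervalIntegrable_of_Ioi hv2 (H.a_nonneg k) (H.b_nonneg _)
  have hnorm : ∫ t in Ioi (0 : ℝ), Delta Tp Ts v t ^ 2 ≤ β * ∫ x in Ioi (0 : ℝ), v x ^ 2 := by
    have hpi := Real.pi_pos
    obtain ⟨A, hA⟩ : ∃ A, A = 2 * (τp + τc) / Real.pi := ⟨_, rfl⟩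
    obtain ⟨B, hB⟩ : ∃ B, B = Real.sqrt ((τp + τc) * τn) := ⟨_, rfl⟩
    have hA0 : 0 ≤ A := by rw [hA]; positivity
    have hB0 : 0 ≤ B := by rw [hB]; positivity
    have : β = (A + B) * A + (A + B) * B := by rw [hβ, ← hA, ← hB]; ring
    rw [this]
    refine H.integral_le hlim hv2 (by positivity) (by positivity) fun k hk => ?_
    obtain ⟨-, h2, h3⟩ := H.nonempty_hold k hk
    rw [hcongr k fun _ d => d ^ 2]
    have := norm_bound hL0 (le_phi hTs k) hk.le h2 h3 (hvi k) (hvi2 k)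
    rw [← hA, ← hB] at this
    linarith
  have hcross : ∫ t in Ioi (0 : ℝ), -(2 * (Delta Tp Ts v t * v t)) ≤
      (0 + τn) * ∫ x in Ioi (0 : ℝ), v x ^ 2 := by
    refine H.integral_le hlim hv2 le_rfl hτn fun k hk => ?_
    obtain ⟨-, h2, -⟩ := H.nonempty_hold k hk
    rw [hcongr k fun t d => -(2 * (d * v t)), intervalIntegral.integral_neg,
      intervalIntegral.integral_const_mul]
    linarith [cross_bound (le_phi hTs k) hk.le h2 (hvi k) (hvi2 k)]
  rw [integral_neg, integral_const_mul] at hcross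
  nlinarith [mul_le_mul_of_nonneg_left hnorm hX, mul_le_mul_of_nonneg_left hcross hY]
end

section
/- Let T' = (t'_k) and T⋆ = (t⋆_k) be admissible event sequences satisfying the asynchrony bounds with parameters τ', τ⋆, τ°, τ♮, and let the sequences (θ_l), (ψ_l), (λ_l) be as defined. Then: (i) the recursion for θ is well defined (the relevant minima exist) and (ψ_l) is strictly increasing with ψ_0 = 0 and ψ_l → +∞; (ii) ψ_{l+1} − ψ_l ≤ τ' + τ° for all l; (iii) ψ_l − λ_l ≤ τ♮ for all l; and (iv) ψ_{l−1} < λ_l ≤ ψ_l for all l ≥ 1. -/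
/-!
The proof rests on one identity: `ψ_{l+1} = φ_k`, where `k` is the least index with `ψ_l < t'_k`
(`psiSeq_succ`). Hence `ψ_l < t'_k ≤ ψ_{l+1}`, which gives strict monotonicity and, as
`t'_k ≤ λ_{l+1} ≤ ψ_{l+1}`, the interlacing of `ψ` and `λ`. Minimality of `k` gives
`t'_{k-1} ≤ ψ_l`, so the bounds on `t'_k - t'_{k-1}` and on `φ_k - t'_k` add up to the bound on
`ψ_{l+1} - ψ_l`, and the bound on `ψ_{l+1} - λ_{l+1}` is the hypothesis on `φ_k` itself.
Since each step of `ψ` passes at least one new sample, `t'_l ≤ ψ_l`, and so `ψ_l → +∞`.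
-/


open MeasureTheory Filter Set

/-- The alternating event times: `θ_0 = 0`; `θ_{l+1} = min {t'_k | t'_k > θ_l}` for `l` even
and `θ_{l+1} = min {t⋆_k | t⋆_k ≥ θ_l}` for `l` odd (using that the sequences are strictly
increasing, the minimum value is attained at the least index). -/
noncomputable def theta (Tp Ts : ℕ → ℝ) : ℕ → ℝ
  | 0 => 0
  | l + 1 =>
      if l % 2 = 0 then Tp (sInf {k | theta Tp Ts l < Tp k})
      else Ts (sInf {k | theta Tp Ts l ≤ Ts k})

/-- `ψ_l = θ_{2l}`. -/
noncomputable def psiSeq (Tp Ts : ℕ → ℝ) (l : ℕ) : ℝ := theta Tp Ts (2 * l)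

/-- `λ_l = max {t'_k | t'_k ≤ ψ_l}`. -/
noncomputable def lamSeq (Tp Ts : ℕ → ℝ) (l : ℕ) : ℝ := Tp (lastIdx Tp (psiSeq Tp Ts l))

namespace Admissible

variable {T : ℕ → ℝ}

lemma strictMono_s12 (h : Admissible T) : StrictMono T := strictMono_nat_of_lt_succ h.2.1

lemma nonneg (h : Admissible T) (k : ℕ) : 0 ≤ T k :=
  h.1 ▸ h.strictMono_s12.monotone k.zero_le

lemma exists_gt (h : Admissible T) (x : ℝ) : {k | x < T k}.Nonempty :=
  (h.2.2.eventually_gt_atTop x).exists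

lemma exists_ge (h : Admissible T) (x : ℝ) : {k | x ≤ T k}.Nonempty :=
  (h.2.2.eventually_ge_atTop x).exists

lemma bddAbove (h : Admissible T) (x : ℝ) : BddAbove {k | T k ≤ x} := by
  obtain ⟨n, hn⟩ := h.exists_gt x
  exact ⟨n, fun k hk => (h.strictMono_s12.lt_iff_lt.1 (lt_of_le_of_lt hk hn)).le⟩

lemma le_lastIdx (h : Admissible T) {x : ℝ} {k : ℕ} (hk : T k ≤ x) : k ≤ lastIdx T x :=
  le_csSup (h.bddAbove x) hk

lemma apply_lastIdx_le (h : Admissible T) {x : ℝ} (hx : 0 ≤ x) : T (lastIdx T x) ≤ x :=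
  Nat.sSup_mem (s := {k | T k ≤ x}) ⟨0, h.1.trans_le hx⟩ (h.bddAbove x)

end Admissible

/-- The index of the first sample strictly after `ψ_l`. -/
noncomputable def nextIdx (Tp Ts : ℕ → ℝ) (l : ℕ) : ℕ := sInf {k | psiSeq Tp Ts l < Tp k}

/-- `ψ_{l+1}` is the first hold update at or after the first sample following `ψ_l`. -/
lemma psiSeq_succ (Tp Ts : ℕ → ℝ) (l : ℕ) :
    psiSeq Tp Ts (l + 1) = phi Tp Ts (nextIdx Tp Ts l) := by
  have h1 : theta Tp Ts (2 * l + 1) = Tp (nextIdx Tp Ts l) := by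
    rw [theta, if_pos (by omega)]
    rfl
  change theta Tp Ts (2 * l + 1 + 1) = _
  rw [theta, if_neg (by omega), h1]
  rfl

lemma psiSeq_lt_nextIdx {Tp : ℕ → ℝ} (Ts : ℕ → ℝ) (hTp : Admissible Tp) (l : ℕ) :
    psiSeq Tp Ts l < Tp (nextIdx Tp Ts l) :=
  Nat.sInf_mem (hTp.exists_gt (psiSeq Tp Ts l))

lemma nextIdx_le_psiSeq_succ (Tp : ℕ → ℝ) {Ts : ℕ → ℝ} (hTs : Admissible Ts) (l : ℕ) :
    Tp (nextIdx Tp Ts l) ≤ psiSeq Tp Ts (l + 1) := by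
  rw [psiSeq_succ]
  exact Nat.sInf_mem (hTs.exists_ge (Tp (nextIdx Tp Ts l)))

/-- Each step of `ψ` passes at least one new sample. -/
lemma le_psiSeq {Tp Ts : ℕ → ℝ} (hTp : Admissible Tp) (hTs : Admissible Ts) (l : ℕ) :
    Tp l ≤ psiSeq Tp Ts l := by
  induction l with
  | zero => exact hTp.1.le
  | succ l ih =>
    have hlt : l < nextIdx Tp Ts l :=
      hTp.strictMono_s12.lt_iff_lt.1 (ih.trans_lt (psiSeq_lt_nextIdx Ts hTp l))
    exact (hTp.strictMono_s12.monotone hlt).trans (nextIdx_le_psiSeq_succ Tp hTs l)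

/-- Properties of the sequences `(θ_l)`, `(ψ_l)`, `(λ_l)`: the minima in the recursion exist,
`ψ` is strictly increasing from `0` to `+∞`, `ψ_{l+1} − ψ_l ≤ τ' + τ°`, `ψ_l − λ_l ≤ τ♮`,
and `ψ_l < λ_{l+1} ≤ ψ_{l+1}`. -/
theorem stmt12 (Tp Ts : ℕ → ℝ) (hTp : Admissible Tp) (hTs : Admissible Ts)
    (τp τs τc τn : ℝ) (hb : AsyncBounds Tp Ts τp τs τc τn) :
    (∀ l, (l % 2 = 0 → {k | theta Tp Ts l < Tp k}.Nonempty) ∧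
          (l % 2 = 1 → {k | theta Tp Ts l ≤ Ts k}.Nonempty)) ∧
    StrictMono (psiSeq Tp Ts) ∧ psiSeq Tp Ts 0 = 0 ∧
    Tendsto (psiSeq Tp Ts) atTop atTop ∧
    (∀ l, psiSeq Tp Ts (l + 1) - psiSeq Tp Ts l ≤ τp + τc) ∧
    (∀ l, psiSeq Tp Ts l - lamSeq Tp Ts l ≤ τn) ∧
    (∀ l, psiSeq Tp Ts l < lamSeq Tp Ts (l + 1) ∧
          lamSeq Tp Ts (l + 1) ≤ psiSeq Tp Ts (l + 1)) := by
  obtain ⟨-, -, -, -, hn0, -, hp, -, hc, hn⟩ := hb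
  have hnonneg : ∀ l, 0 ≤ psiSeq Tp Ts l := fun l => (hTp.nonneg l).trans (le_psiSeq hTp hTs l)
  refine ⟨fun l => ⟨fun _ => hTp.exists_gt _, fun _ => hTs.exists_ge _⟩,
    strictMono_nat_of_lt_succ fun l =>
      (psiSeq_lt_nextIdx Ts hTp l).trans_le (nextIdx_le_psiSeq_succ Tp hTs l),
    rfl, tendsto_atTop_mono (le_psiSeq hTp hTs) hTp.2.2, fun l => ?_, fun l => ?_, fun l => ⟨?_, ?_⟩⟩
  · have hlt := psiSeq_lt_nextIdx Ts hTp l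
    have hphi := hc (nextIdx Tp Ts l)
    rw [← psiSeq_succ] at hphi
    -- `t'_0 = 0 ≤ ψ_l`, so the next sample has a predecessor, which is at most `ψ_l`.
    obtain ⟨m, hm⟩ : ∃ m, nextIdx Tp Ts l = m + 1 := by
      refine Nat.exists_eq_succ_of_ne_zero fun h0 => ?_
      rw [h0, hTp.1] at hlt
      exact hlt.not_ge (hnonneg l)
    have hpred : Tp m ≤ psiSeq Tp Ts l :=
      not_lt.1 (Nat.notMem_of_lt_sInf (s := {k | psiSeq Tp Ts l < Tp k})
        (hm ▸ m.lt_succ_self : m < nextIdx Tp Ts l))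
    rw [hm] at hphi
    linarith [hp m]
  · cases l with
    | zero =>
      have h0 : psiSeq Tp Ts 0 = 0 := rfl
      have := hTp.nonneg (lastIdx Tp (psiSeq Tp Ts 0))
      rw [lamSeq]
      linarith
    | succ l =>
      rw [lamSeq, psiSeq_succ]
      exact hn _
  · exact (psiSeq_lt_nextIdx Ts hTp l).trans_le
      (hTp.strictMono_s12.monotone (hTp.le_lastIdx (nextIdx_le_psiSeq_succ Tp hTs l)))
  · exact hTp.apply_lastIdx_le (hnonneg _)
end
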